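/- Let X = (X_1, X_2, …) be a sequence of ℝ^d-valued random vectors with partial sums S_n := X_1 + … + X_n, let A_n be invertible d×d real matrices and b_n ∈ ℝ^d, and assume: (ii) the triangular array (A_n X_j : 1 ≤ j ≤ n, n ≥ 1) is infinitesimal; (iii) the distributions of A_n S_n + b_n converge weakly to a full probability measure μ on ℝ^d. Then |det A_{n+1} / det A_n| → 1 as n → ∞. -/

import Mathlib

open MeasureTheory Filter Topology Matrix

/-- Convolution of two Borel measures on `ℝ^d`. -/
noncomputable def mconv {d : ℕ} (μ ν : Measure (Fin d → ℝ)) : Measure (Fin d → ℝ) :=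
  (μ.prod ν).map (fun p => p.1 + p.2)

/-- The Urbanik decomposability semigroup `D(μ)`: all matrices `A` such that
`μ = (A_*μ) ∗ ν` for some probability measure `ν`. -/
def UrbanikD {d : ℕ} (μ : Measure (Fin d → ℝ)) : Set (Matrix (Fin d) (Fin d) ℝ) :=
  {A | ∃ ν : Measure (Fin d → ℝ), IsProbabilityMeasure ν ∧ μ = mconv (μ.map A.mulVec) ν}

/-- A measure on `ℝ^d` is full if its support is not contained in any hyperplane,
i.e. no translate `v + L` of a proper linear subspace `L` carries all of its mass. -/
def IsFull {d : ℕ} (μ : Measure (Fin d → ℝ)) : Prop :=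
  ∀ (v : Fin d → ℝ) (L : Submodule ℝ (Fin d → ℝ)), L ≠ ⊤ → μ {x | x - v ∈ L} < 1

/-- Weak convergence of a sequence of measures on `ℝ^d`. -/
def WeakLim {d : ℕ} (μs : ℕ → Measure (Fin d → ℝ)) (μ : Measure (Fin d → ℝ)) : Prop :=
  ∀ f : BoundedContinuousFunction (Fin d → ℝ) ℝ,
    Tendsto (fun n => ∫ x, f x ∂(μs n)) atTop (𝓝 (∫ x, f x ∂μ))

/-- Partial sums `S_n = X_1 + ... + X_n`. -/
def partialSum {Ω : Type*} {d : ℕ} (X : ℕ → Ω → (Fin d → ℝ)) (n : ℕ) (ω : Ω) :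
    Fin d → ℝ :=
  ∑ j ∈ Finset.Icc 1 n, X j ω

/-- The triangular array `(A_n X_j : 1 ≤ j ≤ n, n ≥ 1)` is infinitesimal:
`sup_{1 ≤ j ≤ n} P(‖A_n X_j‖ ≥ ε) → 0` as `n → ∞`, for every `ε > 0`. -/
def Infinitesimal {Ω : Type*} [MeasurableSpace Ω] {d : ℕ} (P : Measure Ω)
    (A : ℕ → Matrix (Fin d) (Fin d) ℝ) (X : ℕ → Ω → (Fin d → ℝ)) : Prop :=
  ∀ ε > (0 : ℝ), ∀ δ > (0 : ℝ), ∃ N : ℕ, ∀ n ≥ N, ∀ j : ℕ, 1 ≤ j → j ≤ n →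
    (P {ω | ε ≤ ‖(A n).mulVec (X j ω)‖}).toReal < δ

/-!
The determinant of the edges of a simplex with random vertices turns the matrix statement into a
scalar one. An affine map `x ↦ C x + c` multiplies this determinant by `det C`, so, for `d + 1`
independent copies of `S_n` with edge determinant `W_n` and as many independent samples of `μ` with
edge determinant `W`, the convergence `A_n S_n + b_n ⇒ μ` gives `det A_n * W_n ⇒ W`. Since
`A_{n+1} X_{n+1}` is negligible, `A_{n+1} S_n + b_{n+1} ⇒ μ` holds too, and gives
`det A_{n+1} * W_n ⇒ W`. As `μ` is full, `W` is not almost surely zero. Two scalings of the same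
random variables that share a nonzero limit are asymptotically equal in absolute value: this is
read off the Laplace transform of the norm, which is strictly monotone.
-/

open ProbabilityTheory Module

section ScalarConvergenceOfTypes

lemma integrable_exp_mul_of_nonpos {Ω : Type*} {m : MeasurableSpace Ω} {μ : Measure Ω}
    [IsFiniteMeasure μ] {X : Ω → ℝ} (hX : AEMeasurable X μ) (hX0 : 0 ≤ᵐ[μ] X) {t : ℝ}
    (ht : t ≤ 0) : Integrable (fun ω ↦ Real.exp (t * X ω)) μ := by
  simpa using integrable_exp_mul_of_le (-t) 0 (neg_nonneg.2 ht) hX.neg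
    (hX0.mono fun ω hω ↦ neg_nonpos.2 hω)

lemma mgf_strictMonoOn_Iic {Ω : Type*} {m : MeasurableSpace Ω} {μ : Measure Ω} [IsFiniteMeasure μ]
    {X : Ω → ℝ} (hX : AEMeasurable X μ) (hX0 : 0 ≤ᵐ[μ] X) (hne : ¬ X =ᵐ[μ] 0) :
    StrictMonoOn (mgf X μ) (Set.Iic 0) := by
  intro s hs t ht hst
  have hint_s := integrable_exp_mul_of_nonpos hX hX0 hs
  have hint_t := integrable_exp_mul_of_nonpos hX hX0 ht
  have hle : ∀ᵐ ω ∂μ, Real.exp (s * X ω) ≤ Real.exp (t * X ω) := by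
    filter_upwards [hX0] with ω hω
    exact Real.exp_le_exp.2 (mul_le_mul_of_nonneg_right hst.le hω)
  refine (integral_mono_ae hint_s hint_t hle).lt_of_ne fun heq ↦ hne ?_
  filter_upwards [(integral_eq_iff_of_ae_le hint_s hint_t hle).1 heq] with ω hω
  exact (mul_eq_mul_right_iff.1 (Real.exp_injective hω)).resolve_left hst.ne

variable {ι : Type*} {l : Filter ι} {Ω : ι → Type*} {m : ∀ i, MeasurableSpace (Ω i)}
  {P : ∀ i, Measure (Ω i)} [∀ i, IsProbabilityMeasure (P i)]
  {Ω' : Type*} {m' : MeasurableSpace Ω'} {P' : Measure Ω'} [IsProbabilityMeasure P']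

lemma tendsto_mgf_norm_of_tendstoInDistribution {E : Type*} [SeminormedAddCommGroup E]
    [MeasurableSpace E] [OpensMeasurableSpace E] {X : ∀ i, Ω i → E} {Z : Ω' → E}
    (h : TendstoInDistribution X l Z P P') {t : ℝ} (ht : t ≤ 0) :
    Tendsto (fun i ↦ mgf (fun ω ↦ ‖X i ω‖) (P i) t) l (𝓝 (mgf (fun ω ↦ ‖Z ω‖) P' t)) := by
  let f : BoundedContinuousFunction E ℝ :=
    .ofNormedAddCommGroup (fun x ↦ Real.exp (t * ‖x‖)) (by fun_prop) 1 fun x ↦ by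
      simpa using mul_nonpos_of_nonpos_of_nonneg ht (norm_nonneg x)
  have hf (Q : Measure E) : AEStronglyMeasurable f Q :=
    f.continuous.measurable.aestronglyMeasurable
  have hlim := ProbabilityMeasure.tendsto_iff_forall_integral_tendsto.1 h.tendsto f
  simp only [ProbabilityMeasure.coe_mk, integral_map (h.forall_aemeasurable _) (hf _),
    integral_map h.aemeasurable_limit (hf _)] at hlim
  exact hlim

variable {𝕜 E : Type*} [NormedField 𝕜] [NormedAddCommGroup E] [NormedSpace 𝕜 E]
  [MeasurableSpace E] [OpensMeasurableSpace E] {W : ∀ i, Ω i → E} {Z : Ω' → E} {a b : ι → 𝕜}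

lemma eventually_mul_norm_lt_of_tendstoInDistribution_smul
    (ha : TendstoInDistribution (fun i ω ↦ a i • W i ω) l Z P P')
    (hb : TendstoInDistribution (fun i ω ↦ b i • W i ω) l Z P P')
    (hZ : ¬ Z =ᵐ[P'] 0) {s t : ℝ} (hs : 0 ≤ s) (hst : s < t) :
    ∀ᶠ i in l, s * ‖a i‖ < t * ‖b i‖ := by
  have hs' : -s ≤ 0 := neg_nonpos.2 hs
  have ht' : -t ≤ 0 := neg_nonpos.2 (hs.trans hst.le)
  have hlt : mgf (fun ω ↦ ‖Z ω‖) P' (-t) < mgf (fun ω ↦ ‖Z ω‖) P' (-s) :=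
    mgf_strictMonoOn_Iic ha.aemeasurable_limit.norm (ae_of_all _ fun _ ↦ norm_nonneg _)
      (by simpa [Filter.EventuallyEq] using hZ) ht' hs' (neg_lt_neg hst)
  filter_upwards [(tendsto_mgf_norm_of_tendstoInDistribution hb ht').eventually_lt
    (tendsto_mgf_norm_of_tendstoInDistribution ha hs') hlt] with i hi
  by_contra! hle
  have hint_a := integrable_exp_mul_of_nonpos (ha.forall_aemeasurable i).norm
    (ae_of_all _ fun _ ↦ norm_nonneg _) hs'
  have hint_b := integrable_exp_mul_of_nonpos (hb.forall_aemeasurable i).norm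
    (ae_of_all _ fun _ ↦ norm_nonneg _) ht'
  refine hi.not_ge (integral_mono hint_a hint_b fun ω ↦ Real.exp_le_exp.2 ?_)
  calc
    -s * ‖a i • W i ω‖ = -(s * ‖a i‖ * ‖W i ω‖) := by rw [norm_smul]; ring
    _ ≤ -(t * ‖b i‖ * ‖W i ω‖) := by gcongr
    _ = -t * ‖b i • W i ω‖ := by rw [norm_smul]; ring

theorem tendsto_norm_div_one_of_tendstoInDistribution_smul
    (ha : TendstoInDistribution (fun i ω ↦ a i • W i ω) l Z P P')
    (hb : TendstoInDistribution (fun i ω ↦ b i • W i ω) l Z P P')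
    (hZ : ¬ Z =ᵐ[P'] 0) :
    Tendsto (fun i ↦ ‖b i / a i‖) l (𝓝 1) := by
  have hbelow {r : ℝ} (hr0 : 0 ≤ r) (hr : r < 1) : ∀ᶠ i in l, r * ‖a i‖ < ‖b i‖ := by
    simpa using eventually_mul_norm_lt_of_tendstoInDistribution_smul ha hb hZ hr0 hr
  have habove {r : ℝ} (hr : 1 < r) : ∀ᶠ i in l, ‖b i‖ < r * ‖a i‖ := by
    simpa using eventually_mul_norm_lt_of_tendstoInDistribution_smul hb ha hZ zero_le_one hr
  have hpos : ∀ᶠ i in l, 0 < ‖a i‖ := (habove one_lt_two).mono fun i hi ↦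
    pos_of_mul_pos_right ((norm_nonneg _).trans_lt hi) zero_le_two
  simp only [norm_div]
  refine tendsto_order.2 ⟨fun r hr ↦ ?_, fun r hr ↦ ?_⟩
  · filter_upwards [hpos, hbelow (le_max_right r 0) (max_lt hr one_pos)] with i hi hlt
    exact (le_max_left r 0).trans_lt ((lt_div_iff₀ hi).2 hlt)
  · filter_upwards [hpos, habove hr] with i hi hlt
    exact (div_lt_iff₀ hi).2 hlt

end ScalarConvergenceOfTypes

section ProductMeasures

variable {κ : Type*} [Fintype κ] {E : κ → Type*} [∀ k, TopologicalSpace (E k)]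
  [∀ k, MeasurableSpace (E k)]

lemma pi_support_subset_support_pi {μ : ∀ k, Measure (E k)} [∀ k, SigmaFinite (μ k)] :
    (Set.univ.pi fun k ↦ (μ k).support) ⊆ (Measure.pi μ).support := by
  intro x hx
  refine (Measure.mem_support_iff_forall x).2 fun U hU ↦ ?_
  rw [nhds_pi, Filter.mem_pi'] at hU
  obtain ⟨I, t, ht, hsub⟩ := hU
  calc
    0 < ∏ k, μ k (t k) := CanonicallyOrderedAdd.prod_pos.2 fun k _ ↦
      (Measure.mem_support_iff_forall _).1 (hx k trivial) _ (ht k)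
    _ = Measure.pi μ (Set.univ.pi t) := (Measure.pi_pi μ t).symm
    _ ≤ Measure.pi μ U :=
      measure_mono ((Set.pi_mono' (fun _ _ ↦ subset_rfl) (Set.subset_univ _)).trans hsub)

theorem tendstoInDistribution_pi [∀ k, SecondCountableTopology (E k)]
    [∀ k, TopologicalSpace.PseudoMetrizableSpace (E k)] [∀ k, OpensMeasurableSpace (E k)]
    {ι : Type*} {l : Filter ι} {Ω : κ → ι → Type*} {m : ∀ k i, MeasurableSpace (Ω k i)}
    {P : ∀ k i, Measure (Ω k i)} [∀ k i, IsProbabilityMeasure (P k i)]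
    {Ω' : κ → Type*} {m' : ∀ k, MeasurableSpace (Ω' k)} {P' : ∀ k, Measure (Ω' k)}
    [∀ k, IsProbabilityMeasure (P' k)] {X : ∀ k i, Ω k i → E k} {Z : ∀ k, Ω' k → E k}
    (h : ∀ k, TendstoInDistribution (X k) l (Z k) (P k) (P' k)) :
    TendstoInDistribution (fun i (ω : ∀ k, Ω k i) k ↦ X k i (ω k)) l (fun ω k ↦ Z k (ω k))
      (fun i ↦ Measure.pi fun k ↦ P k i) (Measure.pi P') where
  forall_aemeasurable i := aemeasurable_pi_lambda _ fun k ↦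
    ((h k).forall_aemeasurable i).comp_quasiMeasurePreserving
      (Measure.quasiMeasurePreserving_eval _ k)
  aemeasurable_limit := aemeasurable_pi_lambda _ fun k ↦
    (h k).aemeasurable_limit.comp_quasiMeasurePreserving (Measure.quasiMeasurePreserving_eval _ k)
  tendsto := by
    have hlim := (ProbabilityMeasure.continuous_pi.tendsto _).comp
      (tendsto_pi_nhds.2 fun k ↦ (h k).tendsto)
    refine ProbabilityMeasure.tendsto_iff_forall_integral_tendsto.2 fun f ↦ ?_
    simp only [ProbabilityMeasure.coe_mk, Measure.pi_map_pi fun k ↦ (h k).forall_aemeasurable _,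
      Measure.pi_map_pi fun k ↦ (h k).aemeasurable_limit]
    exact ProbabilityMeasure.tendsto_iff_forall_integral_tendsto.1 hlim f

end ProductMeasures

section Simplex

/-- The edge vectors `x (i + 1) - x 0` of the simplex with vertices `x 0, …, x n`, as the rows of a
matrix; its determinant is a signed multiple of the volume of the simplex. -/
def simplexEdges {n : ℕ} {ι R : Type*} [Sub R] (x : Fin (n + 1) → ι → R) : Matrix (Fin n) ι R :=
  Matrix.of fun i ↦ x i.succ - x 0

lemma simplexEdges_mulVec_add {n : ℕ} {ι κ R : Type*} [Fintype ι] [CommRing R]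
    (C : Matrix κ ι R) (c : κ → R) (x : Fin (n + 1) → ι → R) :
    (simplexEdges fun i ↦ C *ᵥ x i + c) = simplexEdges x * Cᵀ := by
  ext i j
  simp [simplexEdges, Matrix.mul_apply, Matrix.mulVec, dotProduct, ← Finset.sum_sub_distrib,
    ← mul_sub, mul_comm]

lemma det_simplexEdges_mulVec_add {n : ℕ} {R : Type*} [CommRing R] (C : Matrix (Fin n) (Fin n) R)
    (c : Fin n → R) (x : Fin (n + 1) → Fin n → R) :
    (simplexEdges fun i ↦ C *ᵥ x i + c).det = C.det * (simplexEdges x).det := by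
  rw [simplexEdges_mulVec_add, Matrix.det_mul, Matrix.det_transpose, mul_comm]

lemma continuous_det_simplexEdges {n : ℕ} {R : Type*} [CommRing R] [TopologicalSpace R]
    [IsTopologicalRing R] :
    Continuous fun x : Fin (n + 1) → Fin n → R ↦ (simplexEdges x).det :=
  Continuous.matrix_det <| continuous_pi fun i ↦ (continuous_apply i.succ).sub (continuous_apply 0)

lemma det_simplexEdges_ne_zero_iff {n : ℕ} {K : Type*} [Field K] {x : Fin (n + 1) → Fin n → K} :
    (simplexEdges x).det ≠ 0 ↔ AffineIndependent K x := by
  rw [affineIndependent_iff_linearIndependent_vsub K x 0, ← isUnit_iff_ne_zero,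
    ← Matrix.isUnit_iff_isUnit_det, ← Matrix.linearIndependent_rows_iff_isUnit,
    ← linearIndependent_equiv (finSuccAboveEquiv (0 : Fin (n + 1)))]
  rfl

lemma exists_affineBasis_fin_mem {K V P : Type*} [DivisionRing K] [AddCommGroup V] [Module K V]
    [FiniteDimensional K V] [AddTorsor V P] {n : ℕ} (hn : finrank K V = n) {s : Set P}
    (hs : affineSpan K s = ⊤) : ∃ p : AffineBasis (Fin (n + 1)) K P, ∀ i, p i ∈ s := by
  obtain ⟨t, hts, p, hp⟩ := AffineBasis.exists_affine_subbasis hs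
  have := p.finite
  have := Fintype.ofFinite t
  have hcard : Fintype.card t = n + 1 := hn ▸ p.card_eq_finrank_add_one
  exact ⟨p.reindex (Fintype.equivFinOfCardEq hcard), fun i ↦ by simp [hp, hts _]⟩

end Simplex

namespace IsFull

variable {d : ℕ} {μ : Measure (Fin d → ℝ)} [IsProbabilityMeasure μ]

lemma affineSpan_support_eq_top (h : IsFull μ) : affineSpan ℝ μ.support = ⊤ := by
  obtain ⟨v, hv⟩ := Measure.nonempty_support (IsProbabilityMeasure.ne_zero μ)
  have hv_span := subset_affineSpan ℝ _ hv
  by_contra hne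
  have hdir : (affineSpan ℝ μ.support).direction ≠ ⊤ :=
    mt (AffineSubspace.direction_eq_top_iff_of_nonempty ⟨v, hv_span⟩).1 hne
  refine (h v _ hdir).ne ((measure_congr (eventuallyEq_univ.2 ?_)).trans measure_univ)
  filter_upwards [Measure.support_mem_ae] with x hx
  exact AffineSubspace.vsub_mem_direction (subset_affineSpan ℝ _ hx) hv_span

lemma not_ae_det_simplexEdges_eq_zero (h : IsFull μ) :
    ¬ (fun x ↦ (simplexEdges x).det) =ᵐ[Measure.pi fun _ : Fin (d + 1) ↦ μ] 0 := by
  obtain ⟨p, hp⟩ := exists_affineBasis_fin_mem (finrank_fin_fun ℝ) h.affineSpan_support_eq_top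
  have hdet : (simplexEdges p).det ≠ 0 := det_simplexEdges_ne_zero_iff.2 p.ind
  have hmem : {x | (simplexEdges x).det ≠ 0} ∈ 𝓝 (p : Fin (d + 1) → Fin d → ℝ) :=
    continuous_det_simplexEdges.continuousAt.eventually_ne hdet
  have hsupp := pi_support_subset_support_pi (μ := fun _ : Fin (d + 1) ↦ μ) fun i _ ↦ hp i
  exact ((Measure.mem_support_iff_forall _).1 hsupp _ hmem).ne'

theorem tendsto_abs_det_div_one (h : IsFull μ) {ι : Type*} {l : Filter ι} {Ω : ι → Type*}
    {m : ∀ i, MeasurableSpace (Ω i)} {P : ∀ i, Measure (Ω i)} [∀ i, IsProbabilityMeasure (P i)]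
    {S : ∀ i, Ω i → Fin d → ℝ} {A B : ι → Matrix (Fin d) (Fin d) ℝ} {a b : ι → Fin d → ℝ}
    (hA : TendstoInDistribution (fun i ω ↦ A i *ᵥ S i ω + a i) l id P μ)
    (hB : TendstoInDistribution (fun i ω ↦ B i *ᵥ S i ω + b i) l id P μ) :
    Tendsto (fun i ↦ |(B i).det / (A i).det|) l (𝓝 1) := by
  have hdet {C : ι → Matrix (Fin d) (Fin d) ℝ} {c : ι → Fin d → ℝ}
      (hC : TendstoInDistribution (fun i ω ↦ C i *ᵥ S i ω + c i) l id P μ) :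
      TendstoInDistribution (fun i ω ↦ (C i).det • (simplexEdges fun k ↦ S i (ω k)).det) l
        (fun x ↦ (simplexEdges x).det) (fun i ↦ Measure.pi fun _ : Fin (d + 1) ↦ P i)
        (Measure.pi fun _ : Fin (d + 1) ↦ μ) := by
    simpa only [Function.comp_def, det_simplexEdges_mulVec_add, smul_eq_mul, id] using
      (tendstoInDistribution_pi fun _ : Fin (d + 1) ↦ hC).continuous_comp
        continuous_det_simplexEdges
  exact tendsto_norm_div_one_of_tendstoInDistribution_smul (hdet hA) (hdet hB)
    h.not_ae_det_simplexEdges_eq_zero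

end IsFull

section PartialSums

lemma partialSum_succ {Ω : Type*} {d : ℕ} (X : ℕ → Ω → (Fin d → ℝ)) (n : ℕ) :
    partialSum X (n + 1) = partialSum X n + X (n + 1) := by
  ext1 ω
  exact Finset.sum_Icc_succ_top (Nat.le_add_left 1 n) _

variable {d : ℕ} {Ω : Type*} [MeasurableSpace Ω] {P : Measure Ω} {X : ℕ → Ω → (Fin d → ℝ)}
  {A : ℕ → Matrix (Fin d) (Fin d) ℝ}

lemma aemeasurable_mulVec_partialSum_add (hX : ∀ j, AEMeasurable (X j) P)
    (C : Matrix (Fin d) (Fin d) ℝ) (c : Fin d → ℝ) (n : ℕ) :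
    AEMeasurable (fun ω ↦ C *ᵥ partialSum X n ω + c) P :=
  (show Continuous fun x ↦ C *ᵥ x + c by fun_prop).measurable.comp_aemeasurable
    (Finset.aemeasurable_fun_sum _ fun j _ ↦ hX j)

lemma Infinitesimal.tendstoInMeasure_diag [IsFiniteMeasure P] (h : Infinitesimal P A X) :
    TendstoInMeasure P (fun n ω ↦ A n *ᵥ X n ω) atTop 0 := by
  refine tendstoInMeasure_iff_measureReal_norm.2 fun ε hε ↦
    (tendsto_order.2 ⟨fun r hr ↦ .of_forall fun _ ↦ hr.trans_le measureReal_nonneg, fun δ hδ ↦ ?_⟩)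
  obtain ⟨N, hN⟩ := h ε hε δ hδ
  filter_upwards [eventually_ge_atTop N, eventually_ge_atTop 1] with n hNn hn
  simpa [Measure.real] using hN n hNn n hn le_rfl

variable [IsProbabilityMeasure P]

lemma WeakLim.tendstoInDistribution {Y : ℕ → Ω → Fin d → ℝ} {μ : Measure (Fin d → ℝ)}
    [IsProbabilityMeasure μ] (h : WeakLim (fun n ↦ P.map (Y n)) μ)
    (hY : ∀ n, AEMeasurable (Y n) P) : TendstoInDistribution Y atTop id (fun _ ↦ P) μ where
  forall_aemeasurable := hY
  tendsto := ProbabilityMeasure.tendsto_iff_forall_integral_tendsto.2 fun f ↦ by simpa using h f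

lemma tendstoInDistribution_succ_mulVec_partialSum {b : ℕ → Fin d → ℝ}
    (hX : ∀ j, AEMeasurable (X j) P)
    (hlast : TendstoInMeasure P (fun n ω ↦ A n *ᵥ X n ω) atTop 0)
    {Ω' : Type*} {m' : MeasurableSpace Ω'} {P' : Measure Ω'} [IsProbabilityMeasure P']
    {Z : Ω' → Fin d → ℝ}
    (h : TendstoInDistribution (fun n ω ↦ A n *ᵥ partialSum X n ω + b n) atTop Z (fun _ ↦ P) P') :
    TendstoInDistribution (fun n ω ↦ A (n + 1) *ᵥ partialSum X n ω + b (n + 1)) atTop Z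
      (fun _ ↦ P) P' := by
  have hshift : TendstoInDistribution
      (fun n ω ↦ A (n + 1) *ᵥ partialSum X (n + 1) ω + b (n + 1)) atTop Z (fun _ ↦ P) P' :=
    { forall_aemeasurable := fun n ↦ h.forall_aemeasurable (n + 1)
      aemeasurable_limit := h.aemeasurable_limit
      tendsto := h.tendsto.comp (tendsto_add_atTop_nat 1) }
  refine tendstoInDistribution_of_tendstoInMeasure_sub _ _ hshift ?_
    fun n ↦ aemeasurable_mulVec_partialSum_add hX _ _ n
  have hlast' := hlast.comp (tendsto_add_atTop_nat 1)
  rw [tendstoInMeasure_iff_norm] at hlast' ⊢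
  simpa [partialSum_succ, Matrix.mulVec_add, Function.comp_def] using hlast'

end PartialSums

theorem abs_det_ratio_tendsto_one_general
    {d : ℕ} {Ω : Type*} [MeasurableSpace Ω] {P : Measure Ω} [IsProbabilityMeasure P]
    {X : ℕ → Ω → (Fin d → ℝ)} (hX : ∀ j, AEMeasurable (X j) P)
    {A : ℕ → Matrix (Fin d) (Fin d) ℝ} {b : ℕ → Fin d → ℝ}
    {μ : Measure (Fin d → ℝ)} [IsProbabilityMeasure μ] (hfull : IsFull μ)
    (hlast : TendstoInMeasure P (fun n ω ↦ A n *ᵥ X n ω) atTop 0)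
    (hconv : WeakLim (fun n ↦ P.map (fun ω ↦ A n *ᵥ partialSum X n ω + b n)) μ) :
    Tendsto (fun n ↦ |(A (n + 1)).det / (A n).det|) atTop (𝓝 1) := by
  have hdist := hconv.tendstoInDistribution fun n ↦
    aemeasurable_mulVec_partialSum_add hX (A n) (b n) n
  exact hfull.tendsto_abs_det_div_one hdist
    (tendstoInDistribution_succ_mulVec_partialSum hX hlast hdist)

/-- **Proposition 1(c).** Under infinitesimality and weak convergence to a full law,
with the `A_n` invertible, `|det A_{n+1} / det A_n| → 1`. -/
theorem abs_det_ratio_tendsto_one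
    {d : ℕ} {Ω : Type*} [MeasurableSpace Ω] (P : Measure Ω) [IsProbabilityMeasure P]
    (X : ℕ → Ω → (Fin d → ℝ)) (hXmeas : ∀ j, Measurable (X j))
    (A : ℕ → Matrix (Fin d) (Fin d) ℝ) (hAinv : ∀ n, IsUnit (A n)) (b : ℕ → Fin d → ℝ)
    (μ : Measure (Fin d → ℝ)) [IsProbabilityMeasure μ] (hfull : IsFull μ)
    (hinf : Infinitesimal P A X)
    (hconv : WeakLim (fun n => P.map (fun ω => (A n).mulVec (partialSum X n ω) + b n)) μ) :
    Tendsto (fun n => |(A (n + 1)).det / (A n).det|) atTop (𝓝 1) :=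
  abs_det_ratio_tendsto_one_general (fun j ↦ (hXmeas j).aemeasurable) hfull
    hinf.tendstoInMeasure_diag hconv
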